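/- arXiv:1705.06214 — 3 statements merged into one kernel-verified Lean document; each statement's English description precedes it below -/
import Mathlib

section
/- For all S5-interpretations I, J and all (w,d) ∈ W^I × Δ^I, (v,e) ∈ W^J × Δ^J: if I,w,d ≈_{2n+1} J,v,e then I,w,d ≈^alt_n J,v,e. -/
/-! Core definitions: S5-interpretations, S5^loc_ALC concepts, S5_FOL formulas,
    bisimulations, games, Gaifman locality, unravellings, normal forms,
    and the two-sorted correspondence language. -/

/-- An S5-interpretation: nonempty sets of worlds and individuals, and for each
world an ALC interpretation of concept and role names. -/
structure S5Interp (NC NR : Type) : Type 1 where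
  W : Type
  Δ : Type
  W_nonempty : Nonempty W
  Δ_nonempty : Nonempty Δ
  conc : NC → W → Set Δ
  role : NR → W → Set (Δ × Δ)

variable {NC NR : Type}

/-- Concepts of S5^loc_ALC : C ::= A | ¬C | C ⊓ D | ∃r.C | □C. -/
inductive DLConcept (NC NR : Type) : Type where
  | atom : NC → DLConcept NC NR
  | neg  : DLConcept NC NR → DLConcept NC NR
  | and  : DLConcept NC NR → DLConcept NC NR → DLConcept NC NR
  | ex   : NR → DLConcept NC NR → DLConcept NC NR
  | box  : DLConcept NC NR → DLConcept NC NR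

/-- ◇C := ¬□¬C. -/
def DLConcept.dia (C : DLConcept NC NR) : DLConcept NC NR := .neg (.box (.neg C))

/-- Satisfaction I,w,d ⊨ C. -/
def DLConcept.Sat (I : S5Interp NC NR) : I.W → I.Δ → DLConcept NC NR → Prop
  | w, d, .atom A  => d ∈ I.conc A w
  | w, d, .neg C   => ¬ DLConcept.Sat I w d C
  | w, d, .and C D => DLConcept.Sat I w d C ∧ DLConcept.Sat I w d D
  | w, d, .ex r C  => ∃ e, (d, e) ∈ I.role r w ∧ DLConcept.Sat I w e C
  | _, d, .box C   => ∀ v, DLConcept.Sat I v d C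

/-- Rank of a concept: maximal nesting depth of □ and ∃r. -/
def DLConcept.rank : DLConcept NC NR → ℕ
  | .atom _  => 0
  | .neg C   => C.rank
  | .and C D => max C.rank D.rank
  | .ex _ C  => C.rank + 1
  | .box C   => C.rank + 1

/-- Formulas of S5-modalized first-order logic over the correspondence
language (variables are natural numbers). -/
inductive FOForm (NC NR : Type) : Type where
  | conc : NC → ℕ → FOForm NC NR
  | role : NR → ℕ → ℕ → FOForm NC NR
  | eq   : ℕ → ℕ → FOForm NC NR
  | neg  : FOForm NC NR → FOForm NC NR
  | and  : FOForm NC NR → FOForm NC NR → FOForm NC NR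
  | ex   : ℕ → FOForm NC NR → FOForm NC NR
  | box  : FOForm NC NR → FOForm NC NR

/-- Satisfaction I,w,η ⊨ φ for S5_FOL. -/
def FOForm.Sat (I : S5Interp NC NR) : I.W → (ℕ → I.Δ) → FOForm NC NR → Prop
  | w, η, .conc A x   => η x ∈ I.conc A w
  | w, η, .role r x y => (η x, η y) ∈ I.role r w
  | _, η, .eq x y     => η x = η y
  | w, η, .neg φ      => ¬ FOForm.Sat I w η φ
  | w, η, .and φ ψ    => FOForm.Sat I w η φ ∧ FOForm.Sat I w η ψ
  | w, η, .ex x φ     => ∃ d, FOForm.Sat I w (Function.update η x d) φ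
  | _, η, .box φ      => ∀ v, FOForm.Sat I v η φ

/-- Rank of a formula: maximal nesting depth of □ and ∃. -/
def FOForm.rank : FOForm NC NR → ℕ
  | .conc _ _   => 0
  | .role _ _ _ => 0
  | .eq _ _     => 0
  | .neg φ      => φ.rank
  | .and φ ψ    => max φ.rank ψ.rank
  | .ex _ φ     => φ.rank + 1
  | .box φ      => φ.rank + 1

/-- Free variables of a formula. -/
def FOForm.freeVars : FOForm NC NR → Set ℕ
  | .conc _ x   => {x}
  | .role _ x y => {x, y}
  | .eq x y     => {x, y}
  | .neg φ      => φ.freeVars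
  | .and φ ψ    => φ.freeVars ∪ ψ.freeVars
  | .ex x φ     => φ.freeVars \ {x}
  | .box φ      => φ.freeVars

/-- The standard translation ST_x, using x+1 as the fresh variable for
existential restrictions. -/
def standardTranslation : ℕ → DLConcept NC NR → FOForm NC NR
  | x, .atom A  => .conc A x
  | x, .neg C   => .neg (standardTranslation x C)
  | x, .and C D => .and (standardTranslation x C) (standardTranslation x D)
  | x, .ex r C  => .ex (x+1) (.and (.role r x (x+1)) (standardTranslation (x+1) C))
  | x, .box C   => .box (standardTranslation x C)

/-- Bisimulations between S5-interpretations. -/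
def IsBisimulation (I J : S5Interp NC NR)
    (R : (I.W × I.Δ) → (J.W × J.Δ) → Prop) : Prop :=
  ∀ w d v e, R (w, d) (v, e) →
    (∀ A : NC, d ∈ I.conc A w ↔ e ∈ J.conc A v) ∧
    (∀ w', ∃ v', R (w', d) (v', e)) ∧
    (∀ v', ∃ w', R (w', d) (v', e)) ∧
    (∀ (r : NR) d', (d, d') ∈ I.role r w → ∃ e', (e, e') ∈ J.role r v ∧ R (w, d') (v, e')) ∧
    (∀ (r : NR) e', (e, e') ∈ J.role r v → ∃ d', (d, d') ∈ I.role r w ∧ R (w, d') (v, e'))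

/-- I,w,d ≈ J,v,e : some bisimulation relates (w,d) and (v,e). -/
def Bisimilar (I J : S5Interp NC NR) (w : I.W) (d : I.Δ) (v : J.W) (e : J.Δ) : Prop :=
  ∃ R, IsBisimulation I J R ∧ R (w, d) (v, e)

/-- Depth-n bisimilarity ≈ₙ (Duplicator wins the n-round bisimulation game). -/
def BisimAtDepth (I J : S5Interp NC NR) : ℕ → I.W → I.Δ → J.W → J.Δ → Prop
  | 0, w, d, v, e => ∀ A : NC, d ∈ I.conc A w ↔ e ∈ J.conc A v
  | n+1, w, d, v, e =>
      (∀ A : NC, d ∈ I.conc A w ↔ e ∈ J.conc A v) ∧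
      (∀ w', ∃ v', BisimAtDepth I J n w' d v' e) ∧
      (∀ v', ∃ w', BisimAtDepth I J n w' d v' e) ∧
      (∀ (r : NR) d', (d, d') ∈ I.role r w →
        ∃ e', (e, e') ∈ J.role r v ∧ BisimAtDepth I J n w d' v e') ∧
      (∀ (r : NR) e', (e, e') ∈ J.role r v →
        ∃ d', (d, d') ∈ I.role r w ∧ BisimAtDepth I J n w d' v e')

/-- Atomic agreement of two configurations. -/
def AltAtom (I J : S5Interp NC NR) (w : I.W) (d : I.Δ) (v : J.W) (e : J.Δ) : Prop :=
  ∀ A : NC, d ∈ I.conc A w ↔ e ∈ J.conc A v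

/-- One pair of Δ-moves (in either interpretation), continuing with `P`. -/
def AltDelta (I J : S5Interp NC NR) (P : I.W → I.Δ → J.W → J.Δ → Prop)
    (w : I.W) (d : I.Δ) (v : J.W) (e : J.Δ) : Prop :=
  (∀ (r : NR) d', (d, d') ∈ I.role r w → ∃ e', (e, e') ∈ J.role r v ∧ P w d' v e') ∧
  (∀ (r : NR) e', (e, e') ∈ J.role r v → ∃ d', (d, d') ∈ I.role r w ∧ P w d' v e')

/-- Duplicator wins the n-round alternating bisimulation game (each round:
an optional pair of W-moves followed by a mandatory pair of Δ-moves; one extra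
optional pair of W-moves may be played at the very end). -/
def AltBisim (I J : S5Interp NC NR) : ℕ → I.W → I.Δ → J.W → J.Δ → Prop
  | 0, w, d, v, e =>
      AltAtom I J w d v e ∧
      (∀ w', ∃ v', AltAtom I J w' d v' e) ∧
      (∀ v', ∃ w', AltAtom I J w' d v' e)
  | n+1, w, d, v, e =>
      AltAtom I J w d v e ∧
      AltDelta I J (AltBisim I J n) w d v e ∧
      (∀ w', ∃ v', AltAtom I J w' d v' e ∧ AltDelta I J (AltBisim I J n) w' d v' e) ∧
      (∀ v', ∃ w', AltAtom I J w' d v' e ∧ AltDelta I J (AltBisim I J n) w' d v' e)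

/-- Winning strategies in the unbounded alternating bisimulation game,
presented as relations closed under the game conditions. -/
def IsAltBisimulation (I J : S5Interp NC NR)
    (R : (I.W × I.Δ) → (J.W × J.Δ) → Prop) : Prop :=
  ∀ w d v e, R (w, d) (v, e) →
    AltAtom I J w d v e ∧
    AltDelta I J (fun w' d' v' e' => R (w', d') (v', e')) w d v e ∧
    (∀ w', ∃ v', AltAtom I J w' d v' e ∧
      AltDelta I J (fun a b c f => R (a, b) (c, f)) w' d v' e) ∧
    (∀ v', ∃ w', AltAtom I J w' d v' e ∧
      AltDelta I J (fun a b c f => R (a, b) (c, f)) w' d v' e)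

/-- I,w,d ≈^alt J,v,e : Duplicator wins the unbounded alternating game. -/
def AltBisimilar (I J : S5Interp NC NR) (w : I.W) (d : I.Δ) (v : J.W) (e : J.Δ) : Prop :=
  ∃ R, IsAltBisimulation I J R ∧ R (w, d) (v, e)

/-- Partial isomorphism between configurations of the S5-Ehrenfeucht–Fraïssé game. -/
def PartialIso (I J : S5Interp NC NR) {k : ℕ} (w : I.W) (v : J.W)
    (ds : Fin k → I.Δ) (es : Fin k → J.Δ) : Prop :=
  (∀ i j, ds i = ds j ↔ es i = es j) ∧
  (∀ (A : NC) i, ds i ∈ I.conc A w ↔ es i ∈ J.conc A v) ∧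
  (∀ (r : NR) i j, (ds i, ds j) ∈ I.role r w ↔ (es i, es j) ∈ J.role r v)

/-- S5-Ehrenfeucht–Fraïssé equivalence up to depth n (Duplicator wins the
n-round EF game). -/
def EFEquiv (I J : S5Interp NC NR) :
    ℕ → (k : ℕ) → I.W → (Fin k → I.Δ) → J.W → (Fin k → J.Δ) → Prop
  | 0, _, w, ds, v, es => PartialIso I J w v ds es
  | n+1, k, w, ds, v, es =>
      PartialIso I J w v ds es ∧
      (∀ w', ∃ v', EFEquiv I J n k w' ds v' es) ∧
      (∀ v', ∃ w', EFEquiv I J n k w' ds v' es) ∧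
      (∀ d, ∃ e, EFEquiv I J n (k+1) w (Fin.snoc ds d) v (Fin.snoc es e)) ∧
      (∀ e, ∃ d, EFEquiv I J n (k+1) w (Fin.snoc ds d) v (Fin.snoc es e))

/-- Adjacency in the Gaifman graph of an S5-interpretation. -/
def GaifmanAdj (I : S5Interp NC NR) (d e : I.Δ) : Prop :=
  d ≠ e ∧ ∃ (r : NR) (w : I.W), (d, e) ∈ I.role r w ∨ (e, d) ∈ I.role r w

/-- The radius-ℓ neighbourhood U^ℓ(d) of d in the Gaifman graph
(the set of elements at Gaifman distance at most ℓ from d). -/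
def GaifmanBall (I : S5Interp NC NR) (d : I.Δ) : ℕ → Set I.Δ
  | 0 => {d}
  | ℓ+1 => GaifmanBall I d ℓ ∪ {e | ∃ e' ∈ GaifmanBall I d ℓ, GaifmanAdj I e' e}

lemma mem_gaifmanBall_self (I : S5Interp NC NR) (d : I.Δ) (ℓ : ℕ) :
    d ∈ GaifmanBall I d ℓ := by
  induction ℓ with
  | zero => simp [GaifmanBall]
  | succ n ih => exact Set.mem_union_left _ ih

/-- Restriction I|_U of an S5-interpretation to a nonempty subset U of its domain. -/
def S5Interp.restrict (I : S5Interp NC NR) (U : Set I.Δ) (hU : U.Nonempty) :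
    S5Interp NC NR where
  W := I.W
  Δ := ↥U
  W_nonempty := I.W_nonempty
  Δ_nonempty := hU.to_subtype
  conc A w := {x | (x : I.Δ) ∈ I.conc A w}
  role r w := {p | ((p.1 : I.Δ), (p.2 : I.Δ)) ∈ I.role r w}

/-- Restriction I|_{U^ℓ(d)} to the radius-ℓ Gaifman neighbourhood of d. -/
def S5Interp.ballRestrict (I : S5Interp NC NR) (d : I.Δ) (ℓ : ℕ) : S5Interp NC NR :=
  I.restrict (GaifmanBall I d ℓ) ⟨d, mem_gaifmanBall_self I d ℓ⟩

/-- The point d viewed inside I|_{U^ℓ(d)}. -/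
def S5Interp.ballPt (I : S5Interp NC NR) (d : I.Δ) (ℓ : ℕ) : (I.ballRestrict d ℓ).Δ :=
  ⟨d, mem_gaifmanBall_self I d ℓ⟩

/-- A formula φ with (single) free variable x is ℓ-local if its truth at d only
depends on the restriction of the interpretation to U^ℓ(d). -/
def IsLocal (φ : FOForm NC NR) (x : ℕ) (ℓ : ℕ) : Prop :=
  ∀ (I : S5Interp NC NR) (w : I.W) (d : I.Δ)
    (η : ℕ → I.Δ) (θ : ℕ → (I.ballRestrict d ℓ).Δ),
    η x = d → (θ x).val = d →
    (FOForm.Sat I w η φ ↔ FOForm.Sat (I.ballRestrict d ℓ) w θ φ)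

/-- φ (with single free variable x) is bisimulation invariant. -/
def BisimInvariant (φ : FOForm NC NR) (x : ℕ) : Prop :=
  ∀ (I J : S5Interp NC NR) (w : I.W) (d : I.Δ) (v : J.W) (e : J.Δ),
    Bisimilar I J w d v e →
    ∀ (η : ℕ → I.Δ) (θ : ℕ → J.Δ), η x = d → θ x = e →
      (FOForm.Sat I w η φ ↔ FOForm.Sat J v θ φ)

/-- φ (with single free variable x) is bisimulation invariant over finite
S5-interpretations. -/
def BisimInvariantFin (φ : FOForm NC NR) (x : ℕ) : Prop :=
  ∀ (I J : S5Interp NC NR), Finite I.W → Finite I.Δ → Finite J.W → Finite J.Δ →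
    ∀ (w : I.W) (d : I.Δ) (v : J.W) (e : J.Δ),
    Bisimilar I J w d v e →
    ∀ (η : ℕ → I.Δ) (θ : ℕ → J.Δ), η x = d → θ x = e →
      (FOForm.Sat I w η φ ↔ FOForm.Sat J v θ φ)

/-- One step along some role at some world (the edge relation used in tree unravellings). -/
def roleStep (I : S5Interp NC NR) (a b : I.Δ) : Prop :=
  ∃ (r : NR) (w : I.W), (a, b) ∈ I.role r w

/-- Paths from d₀: a path (d₀,d₁,…,d_k) is encoded by its tail list (d₁,…,d_k). -/
def UPath (I : S5Interp NC NR) (d0 : I.Δ) : Type :=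
  { l : List I.Δ // List.Chain (roleStep I) d0 l }

/-- π : the last entry of a path. -/
def UPath.last {I : S5Interp NC NR} {d0 : I.Δ} (p : UPath I d0) : I.Δ :=
  (d0 :: p.val).getLast (by simp)

/-- The tree unravelling I*_{d₀}. -/
def S5Interp.unravel (I : S5Interp NC NR) (d0 : I.Δ) : S5Interp NC NR where
  W := I.W
  Δ := UPath I d0
  W_nonempty := I.W_nonempty
  Δ_nonempty := ⟨⟨[], List.Chain.nil⟩⟩
  conc A w := {p | p.last ∈ I.conc A w}
  role r w := {q | ∃ d, (q.1.last, d) ∈ I.role r w ∧ q.2.val = q.1.val ++ [d]}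

/-- Paths from d₀ of length at most ℓ. -/
def PPath (I : S5Interp NC NR) (d0 : I.Δ) (ℓ : ℕ) : Type :=
  { l : List I.Δ // List.Chain (roleStep I) d0 l ∧ l.length ≤ ℓ }

def PPath.last {I : S5Interp NC NR} {d0 : I.Δ} {ℓ : ℕ} (p : PPath I d0 ℓ) : I.Δ :=
  (d0 :: p.val).getLast (by simp)

/-- The map ρ of the partial unravelling: a surviving path goes to its last
entry, an element of the fresh copy of I to itself. -/
def punravelProj (I : S5Interp NC NR) (d0 : I.Δ) (ℓ : ℕ) :
    PPath I d0 ℓ ⊕ I.Δ → I.Δ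
  | Sum.inl p => p.last
  | Sum.inr d => d

/-- The partial unravelling of I at d₀ up to level ℓ: the tree unravelling
restricted to the radius-(ℓ+1) Gaifman neighbourhood of the root, with each
leaf path at distance ℓ+1 identified with its last entry in a fresh disjoint
copy of I. -/
def S5Interp.partialUnravel (I : S5Interp NC NR) (d0 : I.Δ) (ℓ : ℕ) :
    S5Interp NC NR where
  W := I.W
  Δ := PPath I d0 ℓ ⊕ I.Δ
  W_nonempty := I.W_nonempty
  Δ_nonempty := ⟨Sum.inl ⟨[], List.Chain.nil, Nat.zero_le _⟩⟩
  conc A w := {x | punravelProj I d0 ℓ x ∈ I.conc A w}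
  role r w := fun q =>
    match q with
    | (Sum.inl p, Sum.inl p') => ∃ d, (p.last, d) ∈ I.role r w ∧ p'.val = p.val ++ [d]
    | (Sum.inl p, Sum.inr d) => p.val.length = ℓ ∧ (p.last, d) ∈ I.role r w
    | (Sum.inr _, Sum.inl _) => False
    | (Sum.inr d, Sum.inr d') => (d, d') ∈ I.role r w

/-! Normal forms, over the finite signature N_C = {A_0,…,A_s}, N_R = {r_0,…,r_{t-1}}. -/

/-- Conjunction of a list of concepts (the empty conjunction is ⊤, encoded as
¬(A₀ ⊓ ¬A₀); it is never used since atom lists are nonempty). -/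
def bigConj (s t : ℕ) : List (DLConcept (Fin (s+1)) (Fin t)) → DLConcept (Fin (s+1)) (Fin t)
  | [] => .neg (.and (.atom 0) (.neg (.atom 0)))
  | [C] => C
  | C :: D :: L => .and C (bigConj s t (D :: L))

/-- Disjunction of a list of concepts (the empty disjunction is ⊥ = A₀ ⊓ ¬A₀). -/
def bigDisj (s t : ℕ) : List (DLConcept (Fin (s+1)) (Fin t)) → DLConcept (Fin (s+1)) (Fin t)
  | [] => .and (.atom 0) (.neg (.atom 0))
  | [C] => C
  | C :: D :: L => .neg (.and (.neg C) (.neg (bigDisj s t (D :: L))))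

/-- All lists obtained from a given list of atoms by choosing a sign
(nothing or negation) for each atom, in order. -/
def signedAll (s t : ℕ) :
    List (DLConcept (Fin (s+1)) (Fin t)) → List (List (DLConcept (Fin (s+1)) (Fin t)))
  | [] => [[]]
  | B :: L =>
      ((signedAll s t L).map (fun T => B :: T)) ++
      ((signedAll s t L).map (fun T => DLConcept.neg B :: T))

/-- The atoms of rank k, given the list of normal forms of rank k−1:
at_k = N_C ∪ {∃r.C | C ∈ nf_{k−1}} ∪ {◇C | C ∈ nf_{k−1}} (in a fixed order). -/
def atomsOf (s t : ℕ) (prev : List (DLConcept (Fin (s+1)) (Fin t))) :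
    List (DLConcept (Fin (s+1)) (Fin t)) :=
  ((List.finRange (s+1)).map DLConcept.atom)
    ++ ((List.finRange t).flatMap (fun r => prev.map (DLConcept.ex r)))
    ++ (prev.map DLConcept.dia)

/-- The normal forms of rank k (as a list enumerating the set nf_k in a fixed
order): all signed conjunctions over the atoms of rank k, where nf_{−1} = ∅. -/
def nfList (s t : ℕ) : ℕ → List (DLConcept (Fin (s+1)) (Fin t))
  | 0 => (signedAll s t (atomsOf s t [])).map (bigConj s t)
  | k+1 => (signedAll s t (atomsOf s t (nfList s t k))).map (bigConj s t)

/-! The two-sorted correspondence language SL. -/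

/-- Formulas of the two-sorted first-order language SL (domain variables and
world variables are natural numbers; each predicate takes one extra
world-sort argument). -/
inductive SLForm (NC NR : Type) : Type where
  | conc : NC → ℕ → ℕ → SLForm NC NR        -- A(x, v)
  | role : NR → ℕ → ℕ → ℕ → SLForm NC NR    -- r(x, y, v)
  | eqD  : ℕ → ℕ → SLForm NC NR             -- x = y (domain sort)
  | eqW  : ℕ → ℕ → SLForm NC NR             -- v = u (world sort)
  | neg  : SLForm NC NR → SLForm NC NR
  | and  : SLForm NC NR → SLForm NC NR → SLForm NC NR
  | exD  : ℕ → SLForm NC NR → SLForm NC NR  -- ∃x (domain sort)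
  | exW  : ℕ → SLForm NC NR → SLForm NC NR  -- ∃v (world sort)

/-- Satisfaction for SL over S5-interpretations, with a domain valuation η and
a world valuation ξ. -/
def SLForm.Sat (I : S5Interp NC NR) : (ℕ → I.Δ) → (ℕ → I.W) → SLForm NC NR → Prop
  | η, ξ, .conc A x v   => η x ∈ I.conc A (ξ v)
  | η, ξ, .role r x y v => (η x, η y) ∈ I.role r (ξ v)
  | η, _, .eqD x y      => η x = η y
  | _, ξ, .eqW v u      => ξ v = ξ u
  | η, ξ, .neg φ        => ¬ SLForm.Sat I η ξ φ
  | η, ξ, .and φ ψ      => SLForm.Sat I η ξ φ ∧ SLForm.Sat I η ξ ψ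
  | η, ξ, .exD x φ      => ∃ d, SLForm.Sat I (Function.update η x d) ξ φ
  | η, ξ, .exW v φ      => ∃ u, SLForm.Sat I η (Function.update ξ v u) φ

/-- Free domain-sort variables of an SL formula. -/
def SLForm.freeDVars : SLForm NC NR → Set ℕ
  | .conc _ x _   => {x}
  | .role _ x y _ => {x, y}
  | .eqD x y      => {x, y}
  | .eqW _ _      => ∅
  | .neg φ        => φ.freeDVars
  | .and φ ψ      => φ.freeDVars ∪ ψ.freeDVars
  | .exD x φ      => φ.freeDVars \ {x}
  | .exW _ φ      => φ.freeDVars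

/-- Free world-sort variables of an SL formula. -/
def SLForm.freeWVars : SLForm NC NR → Set ℕ
  | .conc _ _ v   => {v}
  | .role _ _ _ v => {v}
  | .eqD _ _      => ∅
  | .eqW v u      => {v, u}
  | .neg φ        => φ.freeWVars
  | .and φ ψ      => φ.freeWVars ∪ ψ.freeWVars
  | .exD _ φ      => φ.freeWVars
  | .exW v φ      => φ.freeWVars \ {v}

/-- The translation (−)^{†_v} of S5_FOL into SL: predicates get the world
variable v as extra argument, and □ becomes universal quantification over v. -/
def dagger (v : ℕ) : FOForm NC NR → SLForm NC NR
  | .conc A x   => .conc A x v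
  | .role r x y => .role r x y v
  | .eq x y     => .eqD x y
  | .neg φ      => .neg (dagger v φ)
  | .and φ ψ    => .and (dagger v φ) (dagger v ψ)
  | .ex x φ     => .exD x (dagger v φ)
  | .box φ      => .neg (.exW v (.neg (dagger v φ)))

/-! Duplicator answers each move as in the bisimulation game. A round of the alternating game
consists of at most one pair of `W`-moves and one pair of `Δ`-moves, each costing one unit of
depth, and the extra unit pays for the optional `W`-moves after the last round. If Spoiler skips
his optional `W`-moves, the unit set aside for them is simply lost, as bisimilarity is monotone
in the depth. -/

section

variable {I J : S5Interp NC NR} {w : I.W} {d : I.Δ} {v : J.W} {e : J.Δ} {m n : ℕ}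

lemma biTotal_mono {α β : Type*} {R S : α → β → Prop} (hRS : ∀ ⦃a b⦄, R a b → S a b)
    (hR : Relator.BiTotal R) : Relator.BiTotal S :=
  ⟨fun a => (hR.1 a).imp fun _ h => hRS h, fun b => (hR.2 b).imp fun _ h => hRS h⟩

lemma AltDelta.mono {P Q : I.W → I.Δ → J.W → J.Δ → Prop}
    (hPQ : ∀ ⦃d' e'⦄, P w d' v e' → Q w d' v e') (hP : AltDelta I J P w d v e) :
    AltDelta I J Q w d v e :=
  ⟨fun r d' hd => (hP.1 r d' hd).imp fun _ h => h.imp_right (hPQ ·),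
    fun r e' he => (hP.2 r e' he).imp fun _ h => h.imp_right (hPQ ·)⟩

namespace BisimAtDepth

lemma altAtom (h : BisimAtDepth I J n w d v e) : AltAtom I J w d v e := by
  cases n with
  | zero => exact h
  | succ n => exact h.1

lemma biTotal (h : BisimAtDepth I J (n + 1) w d v e) :
    Relator.BiTotal fun w' v' => BisimAtDepth I J n w' d v' e :=
  ⟨h.2.1, h.2.2.1⟩

lemma altDelta (h : BisimAtDepth I J (n + 1) w d v e) :
    AltDelta I J (BisimAtDepth I J n) w d v e :=
  h.2.2.2

lemma of_le (hmn : m ≤ n) (h : BisimAtDepth I J n w d v e) : BisimAtDepth I J m w d v e := by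
  induction m generalizing n w d v e with
  | zero => exact h.altAtom
  | succ m ih =>
    obtain ⟨n, rfl⟩ := Nat.exists_eq_add_of_le' hmn
    have hle : m ≤ n + m := Nat.le_add_left m n
    have worlds : Relator.BiTotal fun w' v' => BisimAtDepth I J m w' d v' e :=
      biTotal_mono (fun _ _ => ih hle) h.biTotal
    exact ⟨h.altAtom, worlds.1, worlds.2, h.altDelta.mono fun _ _ => ih hle⟩

end BisimAtDepth

/-- Duplicator wins the remainder of the `n`-round alternating game once the optional `W`-moves
that open it have been played or skipped. For `n = 0` these are the extra `W`-moves allowed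
after the last round, so that only atomic agreement is left to check. -/
def AltBisimAfterWMoves (I J : S5Interp NC NR) : ℕ → I.W → I.Δ → J.W → J.Δ → Prop
  | 0, w, d, v, e => AltAtom I J w d v e
  | n + 1, w, d, v, e => AltAtom I J w d v e ∧ AltDelta I J (AltBisim I J n) w d v e

lemma altBisim_iff_altBisimAfterWMoves :
    AltBisim I J n w d v e ↔ AltBisimAfterWMoves I J n w d v e ∧
      Relator.BiTotal fun w' v' => AltBisimAfterWMoves I J n w' d v' e := by
  cases n with
  | zero => exact Iff.rfl
  | succ n => exact and_assoc.symm

namespace BisimAtDepth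

lemma altBisim_of_forall_altBisimAfterWMoves
    (hmn : ∀ ⦃w d v e⦄, BisimAtDepth I J m w d v e → AltBisimAfterWMoves I J n w d v e)
    (h : BisimAtDepth I J (m + 1) w d v e) : AltBisim I J n w d v e :=
  altBisim_iff_altBisimAfterWMoves.2
    ⟨hmn (h.of_le m.le_succ), biTotal_mono (fun _ _ h' => hmn h') h.biTotal⟩

lemma altBisimAfterWMoves (h : BisimAtDepth I J (2 * n) w d v e) :
    AltBisimAfterWMoves I J n w d v e := by
  induction n generalizing w d v e with
  | zero => exact h
  | succ n ih =>
    exact ⟨h.altAtom, h.altDelta.mono fun _ _ h' =>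
      h'.altBisim_of_forall_altBisimAfterWMoves fun _ _ _ _ => ih⟩

end BisimAtDepth

end

/-- depth-(2n+1) bisimilarity implies Duplicator wins the
n-round alternating bisimulation game. -/
theorem bisimAtDepth_to_altBisim (NC NR : Type) (I J : S5Interp NC NR) (n : ℕ)
    (w : I.W) (d : I.Δ) (v : J.W) (e : J.Δ)
    (h : BisimAtDepth I J (2 * n + 1) w d v e) :
    AltBisim I J n w d v e :=
  h.altBisim_of_forall_altBisimAfterWMoves fun _ _ _ _ h' => h'.altBisimAfterWMoves
end

section
/- Let φ = φ(x) be an S5_FOL formula of rank n with one free variable that is bisimulation invariant. Then φ is ℓ-local for ℓ = 3^n: for every S5-interpretation I, every w ∈ W^I and d ∈ Δ^I, I,w,d ⊨ φ if and only if I|_{U^ℓ(d)},w,d ⊨ φ. -/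
variable {NC NR : Type}

/-!
Bisimulations only see generated parts of an interpretation, so `φ` cannot tell `I` or `I|_U`
apart from a disjoint union containing infinitely many copies of both. Inside this union Duplicator
wins the `n`-round Ehrenfeucht–Fraïssé game between `d` in a copy of `I` and `d` in a copy of `I|_U`
as soon as `U` contains the ball of radius `2 ^ n - 1` around `d`: every pebble is answered by the
same individual of `I`; if, for `m` the number of rounds left after the move, it lies within
distance `2 ^ m` of an earlier pebble in the same copy, the answer goes into the copy of the pebble
paired with that one, and otherwise into a fresh copy of the same kind. World moves are answered by
the same world, and `2 ^ n - 1 ≤ 3 ^ n`.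
-/

section GaifmanGraph

variable {I : S5Interp NC NR} {d e : I.Δ} {k m : ℕ}

/-- The Gaifman graph of an S5-interpretation, as a `SimpleGraph`, so that Gaifman distance is
`SimpleGraph.edist`. -/
def gaifmanGraph (I : S5Interp NC NR) : SimpleGraph I.Δ where
  Adj := GaifmanAdj I
  symm := ⟨fun _ _ ⟨hne, r, w, h⟩ => ⟨hne.symm, r, w, h.symm⟩⟩
  loopless := ⟨fun _ h => h.1 rfl⟩

theorem gaifmanBall_mono : Monotone (GaifmanBall I d) :=
  monotone_nat_of_le_succ fun _ => Set.subset_union_left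

theorem mem_gaifmanBall_of_walk (p : (gaifmanGraph I).Walk d e) : e ∈ GaifmanBall I d p.length := by
  induction p using SimpleGraph.Walk.concatRec with
  | Hnil => exact mem_gaifmanBall_self I _ _
  | Hconcat p h ih =>
    rw [SimpleGraph.Walk.length_concat]
    exact Or.inr ⟨_, ih, h⟩

theorem edist_le_of_mem_gaifmanBall (h : e ∈ GaifmanBall I d m) :
    (gaifmanGraph I).edist d e ≤ m := by
  induction m generalizing e with
  | zero => exact (SimpleGraph.edist_eq_zero_iff.2 (Eq.symm h)).le
  | succ m ih =>
    push_cast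
    rcases h with h | ⟨f, hf, hfe⟩
    · exact (ih h).trans le_self_add
    · exact SimpleGraph.edist_triangle.trans
        (add_le_add (ih hf) (SimpleGraph.edist_eq_one_iff_adj.2 hfe).le)

theorem mem_gaifmanBall_iff_edist_le : e ∈ GaifmanBall I d m ↔ (gaifmanGraph I).edist d e ≤ m := by
  refine ⟨edist_le_of_mem_gaifmanBall, fun h => ?_⟩
  obtain ⟨p, hp⟩ :=
    SimpleGraph.exists_walk_of_edist_ne_top (h.trans_lt (ENat.natCast_lt_top m)).ne
  exact gaifmanBall_mono (Nat.cast_le.1 (hp.trans_le h)) (mem_gaifmanBall_of_walk p)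

theorem mem_gaifmanBall_comm : e ∈ GaifmanBall I d m ↔ d ∈ GaifmanBall I e m := by
  simp only [mem_gaifmanBall_iff_edist_le, SimpleGraph.edist_comm]

theorem gaifmanBall_subset_gaifmanBall_add (h : e ∈ GaifmanBall I d m) :
    GaifmanBall I e k ⊆ GaifmanBall I d (m + k) := fun f hf => by
  rw [mem_gaifmanBall_iff_edist_le] at *
  push_cast
  exact SimpleGraph.edist_triangle.trans (add_le_add h hf)

theorem mem_gaifmanBall_one_of_role {r : NR} {w : I.W} (h : (d, e) ∈ I.role r w) :
    e ∈ GaifmanBall I d 1 := by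
  by_cases hde : d = e
  · exact hde ▸ mem_gaifmanBall_self I d 1
  · exact Or.inr ⟨d, rfl, hde, r, w, Or.inl h⟩

end GaifmanGraph

section EhrenfeuchtFraisse

variable {I J : S5Interp NC NR} {n k : ℕ} {w : I.W} {ds : Fin k → I.Δ} {v : J.W} {es : Fin k → J.Δ}

theorem EFEquiv.partialIso (h : EFEquiv I J n k w ds v es) : PartialIso I J w v ds es := by
  cases n with
  | zero => exact h
  | succ n => exact h.1

theorem update_comp_eq_snoc_comp {α β : Type*} [DecidableEq β] (ds : Fin k → α) (σ : β → Fin k)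
    (x : β) (d : α) :
    Function.update (ds ∘ σ) x d =
      (Fin.snoc ds d : Fin (k + 1) → α) ∘ Function.update (Fin.castSucc ∘ σ) x (Fin.last k) := by
  rw [Function.comp_update, Fin.snoc_last, ← Function.comp_assoc, Fin.snoc_comp_castSucc]

theorem EFEquiv.sat_iff {φ : FOForm NC NR} (h : EFEquiv I J n k w ds v es) (hφ : φ.rank ≤ n)
    (σ : ℕ → Fin k) : φ.Sat I w (ds ∘ σ) ↔ φ.Sat J v (es ∘ σ) := by
  induction φ generalizing n k w ds v es with
  | conc A x => exact h.partialIso.2.1 A (σ x)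
  | role r x y => exact h.partialIso.2.2 r (σ x) (σ y)
  | eq x y => exact h.partialIso.1 (σ x) (σ y)
  | neg φ ih => exact not_congr (ih h hφ σ)
  | and φ ψ ihφ ihψ =>
    exact and_congr (ihφ h (le_of_max_le_left hφ) σ) (ihψ h (le_of_max_le_right hφ) σ)
  | ex x φ ih =>
    obtain ⟨n, rfl⟩ := Nat.exists_eq_add_of_le' (Nat.le_of_add_left_le hφ)
    obtain ⟨-, -, -, forth, back⟩ := h
    have sat_update_iff {d : I.Δ} {e : J.Δ}
        (h' : EFEquiv I J n (k + 1) w (Fin.snoc ds d) v (Fin.snoc es e)) :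
        φ.Sat I w (Function.update (ds ∘ σ) x d) ↔ φ.Sat J v (Function.update (es ∘ σ) x e) := by
      rw [update_comp_eq_snoc_comp ds, update_comp_eq_snoc_comp es]
      exact ih h' (Nat.le_of_succ_le_succ hφ) _
    constructor
    · rintro ⟨d, hd⟩
      obtain ⟨e, h'⟩ := forth d
      exact ⟨e, (sat_update_iff h').1 hd⟩
    · rintro ⟨e, he⟩
      obtain ⟨d, h'⟩ := back e
      exact ⟨d, (sat_update_iff h').2 he⟩
  | box φ ih =>
    obtain ⟨n, rfl⟩ := Nat.exists_eq_add_of_le' (Nat.le_of_add_left_le hφ)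
    obtain ⟨-, forth, back, -, -⟩ := h
    constructor
    · intro hw v'
      obtain ⟨w', h'⟩ := back v'
      exact (ih h' (Nat.le_of_succ_le_succ hφ) σ).1 (hw w')
    · intro hv w'
      obtain ⟨v', h'⟩ := forth w'
      exact (ih h' (Nat.le_of_succ_le_succ hφ) σ).2 (hv v')

end EhrenfeuchtFraisse

/-- A bounded morphism (p-morphism) of S5-interpretations, given by a map `g` on worlds and a map
`f` on individuals: the functional form of a bisimulation. -/
structure IsBoundedMorphism (I J : S5Interp NC NR) (g : I.W → J.W) (f : I.Δ → J.Δ) : Prop where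
  surjective : g.Surjective
  conc_iff : ∀ A w d, d ∈ I.conc A w ↔ f d ∈ J.conc A (g w)
  forth : ∀ r w d d', (d, d') ∈ I.role r w → (f d, f d') ∈ J.role r (g w)
  back : ∀ r w d e, (f d, e) ∈ J.role r (g w) → ∃ d', (d, d') ∈ I.role r w ∧ f d' = e

theorem IsBoundedMorphism.bisimilar {I J : S5Interp NC NR} {g : I.W → J.W} {f : I.Δ → J.Δ}
    (h : IsBoundedMorphism I J g f) (w : I.W) (d : I.Δ) : Bisimilar I J w d (g w) (f d) := by
  refine ⟨fun p q => q = (g p.1, f p.2), ?_, rfl⟩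
  rintro w d _ _ ⟨⟩
  refine ⟨(h.conc_iff · w d), fun w' => ⟨g w', rfl⟩, fun v' => ?_,
    fun r d' hd' => ⟨f d', h.forth r w d d' hd', rfl⟩, fun r e he => ?_⟩
  · obtain ⟨w', rfl⟩ := h.surjective v'
    exact ⟨w', rfl⟩
  · obtain ⟨d', hd', rfl⟩ := h.back r w d e he
    exact ⟨d', hd', rfl⟩

theorem isBoundedMorphism_restrict_val {I : S5Interp NC NR} {U : Set I.Δ} (hU : U.Nonempty)
    (hclosed : ∀ r w d e, d ∈ U → (d, e) ∈ I.role r w → e ∈ U) :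
    IsBoundedMorphism (I.restrict U hU) I id Subtype.val where
  surjective := Function.surjective_id
  conc_iff _ _ _ := Iff.rfl
  forth _ _ _ _ := id
  back r w d e h := ⟨⟨e, hclosed r w _ e d.2 h⟩, h, rfl⟩

section Copies

variable {I : S5Interp NC NR} {ι : Type} {U : ι → Set I.Δ}

/-- An individual of the disjoint union of countably many copies of each restriction `I|_{U i}`:
the component `(i, m)` is the `m`-th copy of `I|_{U i}`. -/
@[ext]
structure CopyPoint (I : S5Interp NC NR) (U : ι → Set I.Δ) where
  component : ι × ℕ
  point : I.Δ
  mem : point ∈ U component.1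

/-- The disjoint union of countably many copies of each restriction `I|_{U i}`, all over the worlds
of `I`. -/
def S5Interp.copies (I : S5Interp NC NR) (U : ι → Set I.Δ) (hU : (⋃ i, U i).Nonempty) :
    S5Interp NC NR where
  W := I.W
  Δ := CopyPoint I U
  W_nonempty := I.W_nonempty
  Δ_nonempty :=
    have ⟨d, hd⟩ := hU
    have ⟨i, hi⟩ := Set.mem_iUnion.1 hd
    ⟨⟨(i, 0), d, hi⟩⟩
  conc A w := {p | p.point ∈ I.conc A w}
  role r w := {q | q.1.component = q.2.component ∧ (q.1.point, q.2.point) ∈ I.role r w}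

theorem isBoundedMorphism_restrict_copies (hU : (⋃ i, U i).Nonempty) (c : ι × ℕ)
    (hc : (U c.1).Nonempty) :
    IsBoundedMorphism (I.restrict (U c.1) hc) (I.copies U hU) id fun d => ⟨c, d.1, d.2⟩ where
  surjective := Function.surjective_id
  conc_iff _ _ _ := Iff.rfl
  forth _ _ _ _ h := ⟨rfl, h⟩
  back := by
    rintro r w d ⟨_, e, he⟩ ⟨⟨⟩, h⟩
    exact ⟨⟨e, he⟩, h, rfl⟩

/-- Duplicator's invariant in the Ehrenfeucht–Fraïssé game on disjoint unions of copies with `n`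
rounds left: pebble pairs lie over the same individuals, pebbles within distance `2 ^ n` share their
component on one side iff they do on the other, and the two components of a pair are copies of the
same restriction unless all restrictions contain the ball of radius `2 ^ n - 1`. -/
structure LocallyMatched (n : ℕ) {k : ℕ} (ds es : Fin k → CopyPoint I U) : Prop where
  point_eq : ∀ i, (ds i).point = (es i).point
  component_eq_iff : ∀ i j, (ds j).point ∈ GaifmanBall I (ds i).point (2 ^ n) →
    ((ds i).component = (ds j).component ↔ (es i).component = (es j).component)
  kind : ∀ i, (ds i).component.1 = (es i).component.1 ∨
    GaifmanBall I (ds i).point (2 ^ n - 1) ⊆ ⋂ j, U j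

namespace LocallyMatched

variable {n k : ℕ} {ds es : Fin k → CopyPoint I U}

theorem symm (h : LocallyMatched n ds es) : LocallyMatched n es ds where
  point_eq i := (h.point_eq i).symm
  component_eq_iff i j hij := by
    rw [← h.point_eq i, ← h.point_eq j] at hij
    exact (h.component_eq_iff i j hij).symm
  kind i := h.point_eq i ▸ (h.kind i).imp_left Eq.symm

theorem mono {m : ℕ} (hmn : m ≤ n) (h : LocallyMatched n ds es) : LocallyMatched m ds es where
  point_eq := h.point_eq
  component_eq_iff i j hij :=
    h.component_eq_iff i j (gaifmanBall_mono (Nat.pow_le_pow_right two_pos hmn) hij)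
  kind i := (h.kind i).imp_right
    (gaifmanBall_mono (Nat.sub_le_sub_right (Nat.pow_le_pow_right two_pos hmn) 1)).trans

theorem snoc (h : LocallyMatched n ds es) {p q : CopyPoint I U} (hpoint : p.point = q.point)
    (hcomponent : ∀ i, (ds i).point ∈ GaifmanBall I p.point (2 ^ n) →
      (p.component = (ds i).component ↔ q.component = (es i).component))
    (hkind : p.component.1 = q.component.1 ∨ GaifmanBall I p.point (2 ^ n - 1) ⊆ ⋂ j, U j) :
    LocallyMatched n (Fin.snoc ds p : Fin (k + 1) → CopyPoint I U) (Fin.snoc es q) where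
  point_eq := Fin.lastCases (by simpa using hpoint) fun i => by simpa using h.point_eq i
  component_eq_iff := by
    refine Fin.lastCases (Fin.lastCases ?_ fun j => ?_) fun i => Fin.lastCases ?_ fun j => ?_
    · simp
    · simpa using hcomponent j
    · simpa [mem_gaifmanBall_comm, eq_comm] using hcomponent i
    · simpa using h.component_eq_iff i j
  kind := Fin.lastCases (by simpa using hkind) fun i => by simpa using h.kind i

theorem exists_snoc_of_near (h : LocallyMatched (n + 1) ds es) {p : CopyPoint I U} {i : Fin k}
    (hcomponent : (ds i).component = p.component)
    (hnear : p.point ∈ GaifmanBall I (ds i).point (2 ^ n)) :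
    ∃ q, LocallyMatched n (Fin.snoc ds p : Fin (k + 1) → CopyPoint I U) (Fin.snoc es q) := by
  have hpow : 2 ^ (n + 1) = 2 ^ n + 2 ^ n := by rw [pow_succ, mul_two]
  have hpos : 0 < 2 ^ n := Nat.two_pow_pos n
  have hmem : p.point ∈ U (es i).component.1 := by
    rcases h.kind i with hi | hi
    · rw [← hi, hcomponent]
      exact p.mem
    · exact Set.mem_iInter.1 (hi (gaifmanBall_mono (by omega) hnear)) _
  refine ⟨⟨(es i).component, p.point, hmem⟩, (h.mono n.le_succ).snoc rfl (fun j hj => ?_) ?_⟩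
  · rw [← hcomponent]
    exact h.component_eq_iff i j (hpow ▸ gaifmanBall_subset_gaifmanBall_add hnear hj)
  · rw [← hcomponent]
    exact (h.kind i).imp_right (((gaifmanBall_subset_gaifmanBall_add hnear).trans
      (gaifmanBall_mono (by omega))).trans)

theorem exists_snoc_of_far (h : LocallyMatched n ds es) {p : CopyPoint I U}
    (hfar : ∀ i, (ds i).component = p.component →
      p.point ∉ GaifmanBall I (ds i).point (2 ^ n)) :
    ∃ q, LocallyMatched n (Fin.snoc ds p : Fin (k + 1) → CopyPoint I U) (Fin.snoc es q) := by
  obtain ⟨m, hm⟩ := (Set.finite_range fun i => (es i).component.2).exists_notMem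
  refine ⟨⟨(p.component.1, m), p.point, p.mem⟩, h.snoc rfl (fun i hi => ?_) (Or.inl rfl)⟩
  exact iff_of_false (fun hp => hfar i hp.symm (mem_gaifmanBall_comm.1 hi))
    fun hq => hm ⟨i, congrArg Prod.snd hq.symm⟩

theorem exists_snoc (h : LocallyMatched (n + 1) ds es) (p : CopyPoint I U) :
    ∃ q, LocallyMatched n (Fin.snoc ds p : Fin (k + 1) → CopyPoint I U) (Fin.snoc es q) := by
  by_cases hnear : ∃ i, (ds i).component = p.component ∧
      p.point ∈ GaifmanBall I (ds i).point (2 ^ n)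
  · obtain ⟨i, hcomponent, hi⟩ := hnear
    exact h.exists_snoc_of_near hcomponent hi
  · push Not at hnear
    exact (h.mono n.le_succ).exists_snoc_of_far hnear

theorem partialIso (hU : (⋃ i, U i).Nonempty) (h : LocallyMatched n ds es) (w : I.W) :
    PartialIso (I.copies U hU) (I.copies U hU) w w ds es := by
  refine ⟨fun i j => ?_, fun A i => ?_, fun r i j => ?_⟩
  · change ds i = ds j ↔ es i = es j
    rw [CopyPoint.ext_iff, CopyPoint.ext_iff, ← h.point_eq i, ← h.point_eq j]
    exact and_congr_left fun hij =>
      h.component_eq_iff i j (hij ▸ mem_gaifmanBall_self I _ _)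
  · change (ds i).point ∈ I.conc A w ↔ (es i).point ∈ I.conc A w
    rw [h.point_eq i]
  · change (_ ∧ ((ds i).point, (ds j).point) ∈ I.role r w) ↔
      (_ ∧ ((es i).point, (es j).point) ∈ I.role r w)
    rw [← h.point_eq i, ← h.point_eq j]
    exact and_congr_left fun hij => h.component_eq_iff i j
      (gaifmanBall_mono Nat.one_le_two_pow (mem_gaifmanBall_one_of_role hij))

theorem efEquiv (hU : (⋃ i, U i).Nonempty) (h : LocallyMatched n ds es) (w : I.W) :
    EFEquiv (I.copies U hU) (I.copies U hU) n k w ds w es := by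
  induction n generalizing k w with
  | zero => exact h.partialIso hU w
  | succ n ih =>
    have hworld (w' : I.W) := ih (h.mono n.le_succ) w'
    refine ⟨h.partialIso hU w, fun w' => ⟨w', hworld w'⟩, fun w' => ⟨w', hworld w'⟩,
      fun p => ?_, fun q => ?_⟩
    · obtain ⟨q, hq⟩ := h.exists_snoc p
      exact ⟨q, ih hq w⟩
    · obtain ⟨p, hp⟩ := h.symm.exists_snoc q
      exact ⟨p, ih hp.symm w⟩

end LocallyMatched

theorem sat_copies_iff (hU : (⋃ i, U i).Nonempty) (φ : FOForm NC NR) (w : I.W)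
    {p q : CopyPoint I U} (hpq : p.point = q.point)
    (hball : ∀ i, GaifmanBall I p.point (2 ^ φ.rank - 1) ⊆ U i) :
    φ.Sat (I.copies U hU) w (fun _ => p) ↔ φ.Sat (I.copies U hU) w (fun _ => q) := by
  have hmatched : LocallyMatched φ.rank (fun _ : Fin 1 => p) (fun _ => q) :=
    ⟨fun _ => hpq, fun _ _ _ => iff_of_true rfl rfl, fun _ => Or.inr (Set.subset_iInter hball)⟩
  exact (hmatched.efEquiv hU w).sat_iff le_rfl fun _ => 0

end Copies

section BisimInvariant

variable {φ : FOForm NC NR} {x : ℕ} {I : S5Interp NC NR}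

theorem BisimInvariant.sat_iff_of_isBoundedMorphism {J : S5Interp NC NR}
    (hφ : BisimInvariant φ x) {g : I.W → J.W} {f : I.Δ → J.Δ} (h : IsBoundedMorphism I J g f)
    (w : I.W) {η : ℕ → I.Δ} {θ : ℕ → J.Δ} (hηθ : f (η x) = θ x) :
    φ.Sat I w η ↔ φ.Sat J (g w) θ :=
  hφ I J w (η x) (g w) (f (η x)) (h.bisimilar w (η x)) η θ rfl hηθ.symm

theorem BisimInvariant.sat_restrict_iff_sat_restrict (hφ : BisimInvariant φ x) (w : I.W)
    {U V : Set I.Δ} (hU : U.Nonempty) (hV : V.Nonempty) {η : ℕ → U} {θ : ℕ → V}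
    (hηθ : (η x).1 = (θ x).1) (hballU : GaifmanBall I (η x).1 (2 ^ φ.rank - 1) ⊆ U)
    (hballV : GaifmanBall I (η x).1 (2 ^ φ.rank - 1) ⊆ V) :
    φ.Sat (I.restrict U hU) w η ↔ φ.Sat (I.restrict V hV) w θ := by
  let S : Bool → Set I.Δ := fun b => cond b U V
  have hS : (⋃ b, S b).Nonempty := hU.mono (Set.subset_iUnion S true)
  calc φ.Sat (I.restrict U hU) w η
    _ ↔ φ.Sat (I.copies S hS) w fun _ => ⟨(true, 0), (η x).1, (η x).2⟩ :=
      hφ.sat_iff_of_isBoundedMorphism (isBoundedMorphism_restrict_copies hS (true, 0) hU) w rfl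
    _ ↔ φ.Sat (I.copies S hS) w fun _ => ⟨(false, 0), (θ x).1, (θ x).2⟩ :=
      sat_copies_iff hS φ w hηθ (Bool.forall_bool.2 ⟨hballV, hballU⟩)
    _ ↔ φ.Sat (I.restrict V hV) w θ :=
      (hφ.sat_iff_of_isBoundedMorphism
        (isBoundedMorphism_restrict_copies hS (false, 0) hV) w rfl).symm

theorem bisim_invariant_local_general (hφ : BisimInvariant φ x) (w : I.W) {U : Set I.Δ}
    (hU : U.Nonempty) {η : ℕ → I.Δ} {θ : ℕ → U} (hηθ : η x = θ x)
    (hball : GaifmanBall I (η x) (2 ^ φ.rank - 1) ⊆ U) :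
    φ.Sat I w η ↔ φ.Sat (I.restrict U hU) w θ := by
  have huniv : (Set.univ : Set I.Δ).Nonempty := ⟨η x, trivial⟩
  calc φ.Sat I w η
    _ ↔ φ.Sat (I.restrict Set.univ huniv) w fun y => ⟨η y, trivial⟩ :=
      (hφ.sat_iff_of_isBoundedMorphism
        (isBoundedMorphism_restrict_val huniv fun _ _ _ _ _ _ => trivial) w rfl).symm
    _ ↔ φ.Sat (I.restrict U hU) w θ :=
      hφ.sat_restrict_iff_sat_restrict w huniv hU hηθ (Set.subset_univ _) hball

end BisimInvariant

/-- every bisimulation-invariant S5_FOL formula of rank n with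
one free variable is ℓ-local for ℓ = 3^n. -/
theorem bisim_invariant_local (NC NR : Type) (φ : FOForm NC NR) (x n : ℕ)
    (hfv : φ.freeVars ⊆ {x}) (hrank : φ.rank = n)
    (hinv : BisimInvariant φ x) :
    IsLocal φ x (3 ^ n) := by
  rintro I w _ η θ rfl hθ
  have hradius : 2 ^ φ.rank - 1 ≤ 3 ^ n :=
    hrank ▸ (Nat.sub_le _ _).trans (Nat.pow_le_pow_left (by norm_num) _)
  exact bisim_invariant_local_general hinv w _ hθ.symm (gaifmanBall_mono hradius)
end

section
/- Let φ be a ≈_k-invariant S5_FOL formula with one free variable x. Then φ is logically equivalent to ST_x(D), where D is the (finite) disjunction of all rank-k normal forms C^k_{I,w,d} over all I,w,d with I,w,d ⊨ φ; in particular, φ is equivalent to the standard translation of an S5^loc_ALC-concept of rank k. -/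
variable {NC NR : Type}

/-- The disjunction of all rank-k normal forms C^k_{I,w,d} over all I,w,d
satisfying φ (at the free variable x). -/
noncomputable def phiNF (s t k x : ℕ) (φ : FOForm (Fin (s+1)) (Fin t)) :
    DLConcept (Fin (s+1)) (Fin t) :=
  bigDisj s t ((nfList s t k).filter (fun C =>
    @decide (∃ (I : S5Interp (Fin (s+1)) (Fin t)) (w : I.W) (d : I.Δ) (η : ℕ → I.Δ),
        η x = d ∧ FOForm.Sat I w η φ ∧ DLConcept.Sat I w d C)
      (Classical.propDecidable _)))

/-! A point satisfies exactly one normal form of rank `k`, the conjunction of its literals over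
`at_k`, so two points satisfying a common normal form agree on `at_k`. Such points are `≈_k`: a
move of Spoiler in the world or role dimension leads to a point whose normal form `C` has rank
`k - 1`, and agreement on the atom `◇C` or `∃r.C` provides the answer. Hence a `≈_k`-invariant
property holds throughout every normal form in which it holds somewhere. -/

namespace DLConcept

lemma sat_dia (I : S5Interp NC NR) (w : I.W) (d : I.Δ) (C : DLConcept NC NR) :
    C.dia.Sat I w d ↔ ∃ v, C.Sat I v d := by
  simp only [dia, Sat, not_forall, not_not]

open Classical in
/-- The literal of a concept `C` at a point: `C` itself if it holds there, and `¬C` otherwise. -/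
noncomputable def literal (I : S5Interp NC NR) (w : I.W) (d : I.Δ) (C : DLConcept NC NR) :
    DLConcept NC NR :=
  if C.Sat I w d then C else C.neg

lemma sat_literal_iff {I J : S5Interp NC NR} {w : I.W} {d : I.Δ} {v : J.W} {e : J.Δ}
    {C : DLConcept NC NR} :
    (C.literal I w d).Sat J v e ↔ (C.Sat I w d ↔ C.Sat J v e) := by
  unfold literal
  split_ifs with hC <;> simp only [Sat, hC, true_iff, false_iff]

end DLConcept

lemma FOForm.sat_standardTranslation (I : S5Interp NC NR) (C : DLConcept NC NR) (x : ℕ)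
    (w : I.W) (η : ℕ → I.Δ) :
    FOForm.Sat I w η (standardTranslation x C) ↔ C.Sat I w (η x) := by
  induction C generalizing x w η with
  | atom A => rfl
  | neg C ih => exact not_congr (ih x w η)
  | and C D ihC ihD => exact and_congr (ihC x w η) (ihD x w η)
  | ex r C ih => simp [standardTranslation, FOForm.Sat, DLConcept.Sat, ih]
  | box C ih => exact forall_congr' fun v => ih x v η

section NormalForms

variable {s t : ℕ}

lemma sat_bigConj (I : S5Interp (Fin (s + 1)) (Fin t)) (w : I.W) (d : I.Δ) :
    ∀ L, (bigConj s t L).Sat I w d ↔ ∀ C ∈ L, C.Sat I w d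
  | [] => by simp [bigConj, DLConcept.Sat]
  | [C] => by simp [bigConj]
  | C :: D :: L => by
    rw [bigConj, DLConcept.Sat, sat_bigConj I w d (D :: L), ← List.forall_mem_cons]

lemma sat_bigDisj (I : S5Interp (Fin (s + 1)) (Fin t)) (w : I.W) (d : I.Δ) :
    ∀ L, (bigDisj s t L).Sat I w d ↔ ∃ C ∈ L, C.Sat I w d
  | [] => by simp [bigDisj, DLConcept.Sat]
  | [C] => by simp [bigDisj]
  | C :: D :: L => by
    simp only [bigDisj, DLConcept.Sat, sat_bigDisj I w d (D :: L), List.exists_mem_cons_iff,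
      not_and_or, not_not]

lemma rank_bigConj_le {k : ℕ} :
    ∀ {L : List (DLConcept (Fin (s + 1)) (Fin t))}, (∀ C ∈ L, C.rank ≤ k) →
      (bigConj s t L).rank ≤ k
  | [], _ => by simp [bigConj, DLConcept.rank]
  | [C], h => h C List.mem_cons_self
  | C :: D :: L, h => by
    rw [List.forall_mem_cons] at h
    exact max_le h.1 (rank_bigConj_le h.2)

lemma rank_bigDisj_le {k : ℕ} :
    ∀ {L : List (DLConcept (Fin (s + 1)) (Fin t))}, (∀ C ∈ L, C.rank ≤ k) →
      (bigDisj s t L).rank ≤ k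
  | [], _ => by simp [bigDisj, DLConcept.rank]
  | [C], h => h C List.mem_cons_self
  | C :: D :: L, h => by
    rw [List.forall_mem_cons] at h
    exact max_le h.1 (rank_bigDisj_le h.2)

lemma mem_signedAll_cons {B : DLConcept (Fin (s + 1)) (Fin t)}
    {L T : List (DLConcept (Fin (s + 1)) (Fin t))} :
    T ∈ signedAll s t (B :: L) ↔ ∃ T' ∈ signedAll s t L, T = B :: T' ∨ T = B.neg :: T' := by
  simp only [signedAll, List.mem_append, List.mem_map, ← exists_or, ← and_or_left, eq_comm]

lemma forall_mem_rank_le_of_mem_signedAll {k : ℕ}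
    {L T : List (DLConcept (Fin (s + 1)) (Fin t))} (hL : ∀ B ∈ L, B.rank ≤ k)
    (hT : T ∈ signedAll s t L) : ∀ C ∈ T, C.rank ≤ k := by
  induction L generalizing T with
  | nil => simp_all [signedAll]
  | cons B L ih =>
    rw [List.forall_mem_cons] at hL
    obtain ⟨T', hT', rfl | rfl⟩ := mem_signedAll_cons.1 hT <;>
      exact List.forall_mem_cons.2 ⟨hL.1, ih hL.2 hT'⟩

lemma mem_signedAll_and_forall_sat_iff (I : S5Interp (Fin (s + 1)) (Fin t)) (w : I.W) (d : I.Δ)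
    {L T : List (DLConcept (Fin (s + 1)) (Fin t))} :
    (T ∈ signedAll s t L ∧ ∀ C ∈ T, C.Sat I w d) ↔ T = L.map (DLConcept.literal I w d) := by
  induction L generalizing T with
  | nil => simp +contextual [signedAll]
  | cons B L ih =>
    rw [List.map_cons, mem_signedAll_cons]
    constructor
    · rintro ⟨⟨T', hT', rfl | rfl⟩, hsat⟩ <;> rw [List.forall_mem_cons] at hsat <;>
        rw [← ih.1 ⟨hT', hsat.2⟩]
      · rw [DLConcept.literal, if_pos hsat.1]
      · rw [DLConcept.literal, if_neg hsat.1]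
    · rintro rfl
      obtain ⟨hmem, hsat⟩ := ih.2 rfl
      refine ⟨⟨_, hmem, ?_⟩, List.forall_mem_cons.2 ⟨DLConcept.sat_literal_iff.2 Iff.rfl, hsat⟩⟩
      unfold DLConcept.literal
      split_ifs
      exacts [Or.inl rfl, Or.inr rfl]

lemma forall_mem_atomsOf {prev : List (DLConcept (Fin (s + 1)) (Fin t))}
    {p : DLConcept (Fin (s + 1)) (Fin t) → Prop} :
    (∀ B ∈ atomsOf s t prev, p B) ↔
      (∀ A, p (.atom A)) ∧ (∀ r, ∀ C ∈ prev, p (.ex r C)) ∧ ∀ C ∈ prev, p C.dia := by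
  simp only [atomsOf, List.forall_mem_append, List.forall_mem_map, List.forall_mem_flatMap,
    List.mem_finRange, forall_const, and_assoc]

/-- The set `at_k` of atoms of rank `k`, as a list. -/
def nfAtoms (s t : ℕ) : ℕ → List (DLConcept (Fin (s + 1)) (Fin t))
  | 0 => atomsOf s t []
  | k + 1 => atomsOf s t (nfList s t k)

lemma nfList_eq_map_bigConj (s t k : ℕ) :
    nfList s t k = (signedAll s t (nfAtoms s t k)).map (bigConj s t) := by
  cases k <;> rfl

lemma forall_mem_nfList_rank_le {k : ℕ} (h : ∀ B ∈ nfAtoms s t k, B.rank ≤ k) :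
    ∀ C ∈ nfList s t k, C.rank ≤ k := by
  rw [nfList_eq_map_bigConj, List.forall_mem_map]
  exact fun T hT => rank_bigConj_le (forall_mem_rank_le_of_mem_signedAll h hT)

lemma forall_mem_nfAtoms_rank_le (k : ℕ) : ∀ B ∈ nfAtoms s t k, B.rank ≤ k := by
  induction k with
  | zero => exact forall_mem_atomsOf.2 (by simp [DLConcept.rank])
  | succ k ih =>
    have hprev := forall_mem_nfList_rank_le ih
    exact forall_mem_atomsOf.2 ⟨fun _ => Nat.zero_le _,
      fun _ C hC => Nat.succ_le_succ (hprev C hC), fun C hC => Nat.succ_le_succ (hprev C hC)⟩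

/-- The normal form `C^k_{I,w,d}`: the conjunction of the literals at `(w, d)` of all rank-`k`
atoms. -/
noncomputable def normalForm (k : ℕ) (I : S5Interp (Fin (s + 1)) (Fin t)) (w : I.W) (d : I.Δ) :
    DLConcept (Fin (s + 1)) (Fin t) :=
  bigConj s t ((nfAtoms s t k).map (DLConcept.literal I w d))

variable {k : ℕ} {I J : S5Interp (Fin (s + 1)) (Fin t)} {w : I.W} {d : I.Δ} {v : J.W} {e : J.Δ}

lemma sat_normalForm_iff :
    (normalForm k I w d).Sat J v e ↔ ∀ B ∈ nfAtoms s t k, (B.Sat I w d ↔ B.Sat J v e) := by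
  simp only [normalForm, sat_bigConj, List.forall_mem_map, DLConcept.sat_literal_iff]

lemma mem_nfList_and_sat_iff {C : DLConcept (Fin (s + 1)) (Fin t)} :
    C ∈ nfList s t k ∧ C.Sat I w d ↔ C = normalForm k I w d := by
  rw [nfList_eq_map_bigConj, List.mem_map]
  constructor
  · rintro ⟨⟨T, hT, rfl⟩, hsat⟩
    rw [sat_bigConj] at hsat
    rw [normalForm, (mem_signedAll_and_forall_sat_iff I w d).1 ⟨hT, hsat⟩]
  · rintro rfl
    exact ⟨⟨_, ((mem_signedAll_and_forall_sat_iff I w d).2 rfl).1, rfl⟩,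
      sat_normalForm_iff.2 fun _ _ => Iff.rfl⟩

lemma normalForm_mem_nfList : normalForm k I w d ∈ nfList s t k :=
  (mem_nfList_and_sat_iff.2 rfl).1

lemma sat_normalForm_self : (normalForm k I w d).Sat I w d :=
  (mem_nfList_and_sat_iff.2 rfl).2

lemma bisimAtDepth_of_forall_nfAtoms_sat_iff
    (h : ∀ B ∈ nfAtoms s t k, (B.Sat I w d ↔ B.Sat J v e)) : BisimAtDepth I J k w d v e := by
  induction k generalizing w d v e with
  | zero => exact (forall_mem_atomsOf.1 h).1
  | succ k ih =>
    obtain ⟨hatom, hex, hdia⟩ := forall_mem_atomsOf.1 h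
    simp only [DLConcept.sat_dia] at hdia
    refine ⟨hatom, fun w' => ?_, fun v' => ?_, fun r d' hd' => ?_, fun r e' he' => ?_⟩
    · obtain ⟨v', hv'⟩ := (hdia _ normalForm_mem_nfList).1 ⟨w', sat_normalForm_self⟩
      exact ⟨v', ih (sat_normalForm_iff.1 hv')⟩
    · obtain ⟨w', hw'⟩ := (hdia _ normalForm_mem_nfList).2 ⟨v', sat_normalForm_self⟩
      exact ⟨w', ih fun B hB => (sat_normalForm_iff.1 hw' B hB).symm⟩
    · obtain ⟨e', he', hsat⟩ := (hex r _ normalForm_mem_nfList).1 ⟨d', hd', sat_normalForm_self⟩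
      exact ⟨e', he', ih (sat_normalForm_iff.1 hsat)⟩
    · obtain ⟨d', hd', hsat⟩ := (hex r _ normalForm_mem_nfList).2 ⟨e', he', sat_normalForm_self⟩
      exact ⟨d', hd', ih fun B hB => (sat_normalForm_iff.1 hsat B hB).symm⟩

lemma bisimAtDepth_of_sat_normalForm (h : (normalForm k I w d).Sat J v e) :
    BisimAtDepth I J k w d v e :=
  bisimAtDepth_of_forall_nfAtoms_sat_iff (sat_normalForm_iff.1 h)

lemma sat_bigDisj_filter_nfList_iff {p : DLConcept (Fin (s + 1)) (Fin t) → Prop}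
    [DecidablePred p] :
    (bigDisj s t ((nfList s t k).filter p)).Sat I w d ↔ p (normalForm k I w d) := by
  simp only [sat_bigDisj, List.mem_filter, decide_eq_true_eq]
  constructor
  · rintro ⟨C, ⟨hC, hp⟩, hsat⟩
    rwa [← mem_nfList_and_sat_iff.1 ⟨hC, hsat⟩]
  · exact fun hp => ⟨_, ⟨normalForm_mem_nfList, hp⟩, sat_normalForm_self⟩

open Classical in
/-- The disjunction of the rank-`k` normal forms realised, at the value of the variable `x`, by an
assignment with property `Φ`. It is `phiNF` with an arbitrary semantic property in place of a
formula; for `V = Unit`, `Φ` is a class of pointed interpretations. -/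
noncomputable def realizedNF (k : ℕ) {V : Type*} (x : V)
    (Φ : (I : S5Interp (Fin (s + 1)) (Fin t)) → I.W → (V → I.Δ) → Prop) :
    DLConcept (Fin (s + 1)) (Fin t) :=
  bigDisj s t ((nfList s t k).filter fun C =>
    ∃ (I : S5Interp (Fin (s + 1)) (Fin t)) (w : I.W) (d : I.Δ) (η : V → I.Δ),
      η x = d ∧ Φ I w η ∧ C.Sat I w d)

theorem nf_characterization_general (k : ℕ) {V : Type*} (x : V)
    (Φ : (I : S5Interp (Fin (s + 1)) (Fin t)) → I.W → (V → I.Δ) → Prop)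
    (hΦ : ∀ (I J : S5Interp (Fin (s + 1)) (Fin t)) (w : I.W) (v : J.W) (η : V → I.Δ)
      (θ : V → J.Δ), BisimAtDepth I J k w (η x) v (θ x) → (Φ I w η ↔ Φ J v θ)) :
    (realizedNF k x Φ).rank ≤ k ∧
      ∀ (I : S5Interp (Fin (s + 1)) (Fin t)) (w : I.W) (η : V → I.Δ),
        Φ I w η ↔ (realizedNF k x Φ).Sat I w (η x) := by
  have hrank := forall_mem_nfList_rank_le (forall_mem_nfAtoms_rank_le (s := s) (t := t) k)
  refine ⟨rank_bigDisj_le fun C hC => hrank C (List.mem_filter.1 hC).1, fun I w η => ?_⟩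
  classical
  rw [realizedNF, sat_bigDisj_filter_nfList_iff]
  constructor
  · exact fun hη => ⟨I, w, η x, η, rfl, hη, sat_normalForm_self⟩
  · rintro ⟨J, v, _, θ, rfl, hθ, hsat⟩
    exact (hΦ I J w v η θ (bisimAtDepth_of_sat_normalForm hsat)).2 hθ

end NormalForms

/-- every ≈ₖ-invariant S5_FOL formula with one free variable x is
logically equivalent to ST_x(D), where D is the disjunction of all rank-k
normal forms satisfied at some point satisfying φ; in particular D is an
S5^loc_ALC-concept of rank (at most) k. -/
theorem nf_characterization (s t k x : ℕ) (φ : FOForm (Fin (s+1)) (Fin t))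
    (hfv : φ.freeVars ⊆ {x})
    (hinv : ∀ (I J : S5Interp (Fin (s+1)) (Fin t)) (w : I.W) (d : I.Δ) (v : J.W) (e : J.Δ),
      BisimAtDepth I J k w d v e →
      ∀ (η : ℕ → I.Δ) (θ : ℕ → J.Δ), η x = d → θ x = e →
        (FOForm.Sat I w η φ ↔ FOForm.Sat J v θ φ)) :
    (phiNF s t k x φ).rank ≤ k ∧
    ∀ (I : S5Interp (Fin (s+1)) (Fin t)) (w : I.W) (d : I.Δ) (η : ℕ → I.Δ), η x = d →
      (FOForm.Sat I w η φ ↔ FOForm.Sat I w η (standardTranslation x (phiNF s t k x φ))) := by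
  obtain ⟨hrank, hsat⟩ := nf_characterization_general k x (fun I w η => FOForm.Sat I w η φ)
    fun I J w v η θ h => hinv I J w _ v _ h η θ rfl rfl
  exact ⟨hrank, fun I w _ η _ =>
    (hsat I w η).trans (FOForm.sat_standardTranslation I _ x w η).symm⟩
end
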